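/- Let ν be a finite positive Borel measure on ℂ, h a scale function, and s > 0. If E ⊆ ℂ∖G_s(ν) is a Borel set with finite one-dimensional Hausdorff measure, then ν(E) = 0. In particular, ν(γ) = 0 for every rectifiable Jordan curve γ that is disjoint from G_s(ν). -/

import Mathlib

open MeasureTheory Filter Topology Metric Set Complex
open scoped ENNReal NNReal BigOperators

noncomputable section

/-- The half-open dyadic square of generation `k` at position `(m, n)`:
`[m·2⁻ᵏ, (m+1)·2⁻ᵏ) × [n·2⁻ᵏ, (n+1)·2⁻ᵏ)`, of side length `2⁻ᵏ`. -/
def dyadicSquare (k m n : ℤ) : Set ℂ :=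
  {z : ℂ | (m : ℝ) * 2 ^ (-k) ≤ z.re ∧ z.re < ((m : ℝ) + 1) * 2 ^ (-k) ∧
    (n : ℝ) * 2 ^ (-k) ≤ z.im ∧ z.im < ((n : ℝ) + 1) * 2 ^ (-k)}

/-- The interior `10Q°` of the square `10Q` concentric with the dyadic square `Q` of parameters
`k, m, n` and of ten times its side length. -/
def dilatedSquare (k m n : ℤ) : Set ℂ :=
  {z : ℂ | |z.re - ((m : ℝ) + 1 / 2) * 2 ^ (-k)| < 5 * 2 ^ (-k) ∧
    |z.im - ((n : ℝ) + 1 / 2) * 2 ^ (-k)| < 5 * 2 ^ (-k)}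

/-- A scale function: nondecreasing, positive on `(0,∞)`, tending to `∞`, with
`∫₀¹ t⁻² h(t) dt < ∞`. -/
structure IsScaleFunction (h : ℝ → ℝ) : Prop where
  nonneg : ∀ t, 0 ≤ t → 0 ≤ h t
  mono : ∀ ⦃s t : ℝ⦄, 0 ≤ s → s ≤ t → h s ≤ h t
  pos : ∀ t : ℝ, 0 < t → 0 < h t
  tendsto_atTop : Tendsto h atTop atTop
  integrable : IntegrableOn (fun t => h t / t ^ 2) (Ioc (0 : ℝ) 1)

/-- The dyadic square of parameters `k, m, n` is heavy with respect to `ν` and the scale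
function `h`: `ν(Q) > h(|Q|)`. -/
def IsHeavy (ν : Measure ℂ) (h : ℝ → ℝ) (k m n : ℤ) : Prop :=
  ENNReal.ofReal (h ((2 : ℝ) ^ (-k))) < ν (dyadicSquare k m n)

/-- The open set `G_s(ν) = ⋃ {10Q° : Q heavy dyadic square, |Q| ≤ s}`. -/
def Gset (ν : Measure ℂ) (h : ℝ → ℝ) (s : ℝ) : Set ℂ :=
  ⋃ (kmn : ℤ × ℤ × ℤ)
    (_ : IsHeavy ν h kmn.1 kmn.2.1 kmn.2.2 ∧ (2 : ℝ) ^ (-kmn.1) ≤ s),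
    dilatedSquare kmn.1 kmn.2.1 kmn.2.2

/-- The dyadic 1-Hausdorff content: infimum of `Σᵢ |Qᵢ|` over countable covers by dyadic
squares. -/
def dyadicContent (E : Set ℂ) : ℝ≥0∞ :=
  ⨅ (c : ℕ → ℤ × ℤ × ℤ) (_ : E ⊆ ⋃ i, dyadicSquare (c i).1 (c i).2.1 (c i).2.2),
    ∑' i, ENNReal.ofReal ((2 : ℝ) ^ (-(c i).1))

/-- `ν` is `h`-dissectible: the dyadic 1-Hausdorff content of `G_s(ν)` tends to `0`
as `s → 0⁺`. -/
def HDissectible (ν : Measure ℂ) (h : ℝ → ℝ) : Prop :=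
  Tendsto (fun s => dyadicContent (Gset ν h s)) (𝓝[>] (0 : ℝ)) (𝓝 0)

/-- `ν` is dissectible: `h`-dissectible for some scale function `h`. -/
def Dissectible (ν : Measure ℂ) : Prop :=
  ∃ h : ℝ → ℝ, IsScaleFunction h ∧ HDissectible ν h

/-- The closed support of a measure on `ℂ`. -/
def msupport (ν : Measure ℂ) : Set ℂ := {z : ℂ | ∀ r > 0, 0 < ν (ball z r)}

/-- The derived set (set of accumulation points) of a set. -/
def derivSet (S : Set ℂ) : Set ℂ := {z : ℂ | z ∈ closure (S \ {z})}

/-- The perturbation matrix `Ψ(λ) = I + (∫ conj(vᵢ) uⱼ (w-λ)⁻¹ dμ)ᵢⱼ`. -/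
def perturbMatrix (μ : Measure ℂ) {m : ℕ} (u v : Fin m → ℂ → ℂ) (lam : ℂ) :
    Matrix (Fin m) (Fin m) ℂ :=
  1 + Matrix.of fun i j => ∫ w, (starRingEnd ℂ) (v i w) * u j w * (w - lam)⁻¹ ∂μ

/-- The perturbation determinant `ψ = det Ψ`. -/
def perturbDet (μ : Measure ℂ) {m : ℕ} (u v : Fin m → ℂ → ℂ) (lam : ℂ) : ℂ :=
  (perturbMatrix μ u v lam).det

/-- The operator norm of a matrix, acting on the Euclidean space `ℂᵐ`. -/
def matOpNorm {m : ℕ} (M : Matrix (Fin m) (Fin m) ℂ) : ℝ :=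
  ‖Matrix.toEuclideanCLM (𝕜 := ℂ) M‖

open scoped Classical in
/-- `ψ̃(z) = ‖Ψ(z)⁻¹‖⁻¹` if `Ψ(z)` is invertible, and `0` otherwise. -/
def psiTilde (μ : Measure ℂ) {m : ℕ} (u v : Fin m → ℂ → ℂ) (z : ℂ) : ℝ :=
  if IsUnit (perturbMatrix μ u v z) then (matOpNorm (perturbMatrix μ u v z)⁻¹)⁻¹ else 0

/-- `T = N + Σⱼ uⱼ ⟨·, vⱼ⟩` on `L²(μ)`, where `N` is multiplication by the variable. -/
def IsPerturbedOp (μ : Measure ℂ) {m : ℕ} (u v : Fin m → ℂ → ℂ)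
    (T : Lp ℂ 2 μ →L[ℂ] Lp ℂ 2 μ) : Prop :=
  ∀ f : Lp ℂ 2 μ, (T f : ℂ → ℂ) =ᵐ[μ]
    fun z => z * f z + ∑ j, (∫ w, f w * (starRingEnd ℂ) (v j w) ∂μ) * u j z

/-- The spectrum of the restriction of `T` to an invariant subspace `p`. -/
def restrictedSpectrum {X : Type*} [NormedAddCommGroup X] [NormedSpace ℂ X]
    (T : X →L[ℂ] X) (p : Submodule ℂ X) (hp : ∀ x ∈ p, T x ∈ p) : Set ℂ :=
  spectrum ℂ ((T : X →ₗ[ℂ] X).restrict hp)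

/-- A Jordan curve: a homeomorphic image of the unit circle. -/
def IsJordanCurve (γ : Set ℂ) : Prop :=
  ∃ f : (sphere (0 : ℂ) 1) → ℂ, Continuous f ∧ Function.Injective f ∧ range f = γ

/-- A piecewise `C¹` smooth Jordan curve. -/
def IsPiecewiseC1JordanCurve (γ : Set ℂ) : Prop :=
  IsJordanCurve γ ∧
  ∃ f : ℝ → ℂ, Continuous f ∧ Function.Periodic f 1 ∧ InjOn f (Ico (0 : ℝ) 1) ∧
    f '' Ico (0 : ℝ) 1 = γ ∧
    ∃ (N : ℕ) (t : ℕ → ℝ), 0 < N ∧ t 0 = 0 ∧ t N = 1 ∧ (∀ i < N, t i < t (i + 1)) ∧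
      ∀ i < N, ContDiffOn ℝ 1 f (Icc (t i) (t (i + 1)))

/-- Relative boundary `∂(A; B)` of `A` inside `B` (for `A ⊆ B`): the frontier of `A` in the
subspace topology of `B`. -/
def relBoundary (A B : Set ℂ) : Set ℂ := B ∩ closure A ∩ closure (B \ A)

/-- Admissibility of a Jordan curve `γ` with respect to the measures `μ` (for the location
condition on `G_s(μ)`) and `ν` (for Carleson constants), and the scale function `h`. -/
def AdmissibleCurve (μ ν : Measure ℂ) (h : ℝ → ℝ) (γ : Set ℂ) : Prop :=
  IsPiecewiseC1JordanCurve γ ∧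
  ∀ z₀ ∉ γ, ∃ s > (0 : ℝ), ∃ Om : ℕ → Set ℂ,
    Monotone Om ∧ (⋃ n, Om n) = connectedComponentIn γᶜ z₀ ∧
    (∀ n, IsOpen (Om n) ∧ IsConnected (Om n) ∧ IsJordanCurve (frontier (Om n)) ∧
      μH[1] (frontier (Om n)) < ⊤) ∧
    γ ∩ Gset μ h s = ∅ ∧ (∀ n, frontier (Om n) ∩ Gset μ h s = ∅) ∧
    (∃ K : ℝ, ∀ (n : ℕ) (z : ℂ) (r : ℝ), 0 < r →
      μH[1] (frontier (Om n) ∩ ball z r) ≤ ENNReal.ofReal (K * r)) ∧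
    (∃ M : ℝ, ∀ n : ℕ, ∀ z ∈ frontier (Om n), ∀ r : ℝ, 0 < r →
      (ν (ball z r)).toReal ≤ M * r)

/-- An admissible Jordan domain. -/
def AdmissibleJordanDomain (μ ν : Measure ℂ) (h : ℝ → ℝ) (Ω : Set ℂ) : Prop :=
  IsOpen Ω ∧ IsConnected Ω ∧ Bornology.IsBounded Ω ∧ AdmissibleCurve μ ν h (frontier Ω)

/-- Bishop's property (β) for an operator on `L²(μ)`. -/
def HasBishopBeta (μ : Measure ℂ) (T : Lp ℂ 2 μ →L[ℂ] Lp ℂ 2 μ) : Prop :=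
  ∀ U : Set ℂ, IsOpen U → ∀ F : ℕ → ℂ → Lp ℂ 2 μ,
    (∀ n, DifferentiableOn ℂ (F n) U) →
    (∀ K : Set ℂ, K ⊆ U → IsCompact K →
      TendstoUniformlyOn (fun n lam => T (F n lam) - lam • F n lam) (fun _ => 0) atTop K) →
    ∀ K : Set ℂ, K ⊆ U → IsCompact K →
      TendstoUniformlyOn (fun n lam => F n lam) (fun _ => 0) atTop K

/-!
Monotonicity of `h` bounds `h(t)/t` by `4 ∫ₜ²ᵗ u⁻² h(u) du`, so integrability of `t⁻² h(t)` at `0`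
gives `h(t) = o(t)`. A point off `G_s(ν)` lies in `10Q°` for each of the nine dyadic squares `Q` of
side `2⁻ᵏ` around it, so these are light once `2⁻ᵏ ≤ s`, and a ball of radius `ρ ≈ 2⁻ᵏ` centred
there has measure at most `9 h(2⁻ᵏ) = o(ρ)`, uniformly in the centre. Comparing `ν` with `c · μH[1]`
on sets of small diameter then gives `ν(E) ≤ c · μH[1](E)` for every `c > 0`.
-/

section HausdorffComparison

theorem measure_le_mkMetric_of_forall_inter_le {X : Type*} [EMetricSpace X] [MeasurableSpace X]
    [BorelSpace X] {ν : Measure X} {E : Set X} {m : ℝ≥0∞ → ℝ≥0∞} {r : ℝ≥0∞} (hr : 0 < r)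
    (hν : ∀ S, ediam S ≤ r → ν (S ∩ E) ≤ m (ediam S)) : ν E ≤ Measure.mkMetric m E := by
  have hle : OuterMeasure.restrict E ν.toOuterMeasure ≤ OuterMeasure.mkMetric m :=
    OuterMeasure.le_mkMetric m _ r hr fun S hS =>
      (OuterMeasure.restrict_apply E S ν.toOuterMeasure).trans_le (hν S hS)
  simpa [OuterMeasure.coe_mkMetric] using hle E

theorem measure_le_mul_ediam_rpow_of_closedBall_le {X : Type*} [PseudoMetricSpace X]
    [MeasurableSpace X] {ν : Measure X} {d : ℝ} {c : ℝ≥0} {r : ℝ} {S : Set X} {z : X} (hz : z ∈ S)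
    (hS : ediam S < ENNReal.ofReal r)
    (hball : ∀ ρ ∈ Ioo 0 r, ν (closedBall z ρ) ≤ c * ENNReal.ofReal ρ ^ d) :
    ν S ≤ c * ediam S ^ d := by
  have hfin : ediam S ≠ ⊤ := hS.ne_top
  have hdiam : Metric.diam S < r := (ENNReal.lt_ofReal_iff_toReal_lt hfin).1 hS
  -- The diameter may be `0`, so the bound is taken at larger radii, which then decrease to it.
  have hlim : Tendsto (fun ρ : ℝ => c * ENNReal.ofReal ρ ^ d) (𝓝[>] Metric.diam S)
      (𝓝 (c * ENNReal.ofReal (Metric.diam S) ^ d)) :=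
    ENNReal.Tendsto.const_mul
      (((ENNReal.continuous_rpow_const.comp ENNReal.continuous_ofReal).tendsto _).mono_left
        nhdsWithin_le_nhds)
      (Or.inr ENNReal.coe_ne_top)
  rw [Metric.diam, ENNReal.ofReal_toReal hfin] at hlim
  refine ge_of_tendsto hlim ?_
  filter_upwards [Ioo_mem_nhdsGT hdiam] with ρ hρ
  have hsub : S ⊆ closedBall z ρ := fun w hw => (dist_le_diam_of_mem' hfin hw hz).trans hρ.1.le
  exact (measure_mono hsub).trans (hball ρ ⟨diam_nonneg.trans_lt hρ.1, hρ.2⟩)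

variable {X : Type*} [MetricSpace X] [MeasurableSpace X] [BorelSpace X] {ν : Measure X}
  {E : Set X} {d : ℝ}

theorem measure_le_mul_hausdorffMeasure_of_closedBall_le {c : ℝ≥0} (hc : c ≠ 0)
    (hball : ∀ᶠ ρ in 𝓝[>] 0, ∀ z ∈ E, ν (closedBall z ρ) ≤ c * ENNReal.ofReal ρ ^ d) :
    ν E ≤ c * μH[d] E := by
  obtain ⟨r, hr, hball⟩ := mem_nhdsGT_iff_exists_Ioo_subset.1 hball
  have hr2 : r / 2 < r := half_lt_self hr
  have hsmall : ∀ S, ediam S ≤ ENNReal.ofReal (r / 2) → ν (S ∩ E) ≤ c * ediam S ^ d := by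
    intro S hS
    obtain hempty | ⟨z, hzS, hzE⟩ := (S ∩ E).eq_empty_or_nonempty
    · simp [hempty]
    have hSr : ediam S < ENNReal.ofReal r := hS.trans_lt ((ENNReal.ofReal_lt_ofReal_iff hr).2 hr2)
    exact (measure_mono inter_subset_left).trans
      (measure_le_mul_ediam_rpow_of_closedBall_le hzS hSr fun ρ hρ => hball hρ z hzE)
  calc ν E ≤ Measure.mkMetric (fun δ => c * δ ^ d) E :=
        measure_le_mkMetric_of_forall_inter_le (ENNReal.ofReal_pos.2 (half_pos hr)) hsmall
    _ ≤ c * μH[d] E :=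
        Measure.mkMetric_mono_smul ENNReal.coe_ne_top (mod_cast hc) EventuallyLE.rfl E

theorem measure_eq_zero_of_closedBall_le_of_hausdorffMeasure_ne_top (hE : μH[d] E ≠ ⊤)
    (hball : ∀ c : ℝ≥0, 0 < c →
      ∀ᶠ ρ in 𝓝[>] 0, ∀ z ∈ E, ν (closedBall z ρ) ≤ c * ENNReal.ofReal ρ ^ d) :
    ν E = 0 := by
  have hlim : Tendsto (fun c : ℝ≥0 => (c : ℝ≥0∞) * μH[d] E) (𝓝[>] 0) (𝓝 0) := by
    have hcont : Continuous fun c : ℝ≥0 => (c : ℝ≥0∞) * μH[d] E :=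
      (ENNReal.continuous_mul_const hE).comp ENNReal.continuous_coe
    simpa using (hcont.tendsto 0).mono_left nhdsWithin_le_nhds
  refine nonpos_iff_eq_zero.1 (ge_of_tendsto hlim ?_)
  filter_upwards [self_mem_nhdsWithin] with c hc
  exact measure_le_mul_hausdorffMeasure_of_closedBall_le (ne_of_gt hc) (hball c hc)

end HausdorffComparison

section ScaleFunction

theorem tendsto_setIntegral_Ioc_mul_nhdsGT_zero {F : Type*} [NormedAddCommGroup F]
    [NormedSpace ℝ F] {g : ℝ → F} {b : ℝ} (hb : 0 < b) (hg : IntegrableOn g (Ioc 0 b)) (a : ℝ) :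
    Tendsto (fun t => ∫ u in Ioc t (a * t), g u) (𝓝[>] 0) (𝓝 0) := by
  have hlength : Tendsto (fun t : ℝ => volume (Ioc t (a * t))) (𝓝[>] 0) (𝓝 0) := by
    have hcont : Continuous fun t : ℝ => ENNReal.ofReal (a * t - t) :=
      ENNReal.continuous_ofReal.comp (by fun_prop)
    simpa [Real.volume_Ioc] using (hcont.tendsto 0).mono_left nhdsWithin_le_nhds
  have hvol : Tendsto (fun t : ℝ => volume.restrict (Ioc 0 b) (Ioc t (a * t))) (𝓝[>] 0) (𝓝 0) :=
    tendsto_of_tendsto_of_tendsto_of_le_of_le tendsto_const_nhds hlength (fun _ => zero_le)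
      fun _ => Measure.restrict_apply_le _ _
  have hlt : ∀ᶠ t in 𝓝[>] 0, a * t < b :=
    ((continuous_const_mul a).tendsto' 0 0 (mul_zero a)).eventually_lt_const hb |>.filter_mono
      nhdsWithin_le_nhds
  refine (hg.tendsto_setIntegral_nhds_zero hvol).congr' ?_
  filter_upwards [self_mem_nhdsWithin, hlt] with t ht hat
  rw [Measure.restrict_restrict measurableSet_Ioc,
    inter_eq_left.2 (Ioc_subset_Ioc (le_of_lt ht) hat.le)]

theorem le_mul_setIntegral_div_pow_of_monotoneOn {f : ℝ → ℝ} {p : ℕ} {t : ℝ} (ht : 0 < t)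
    (hft : 0 ≤ f t) (hmono : MonotoneOn f (Icc t (2 * t)))
    (hint : IntegrableOn (fun u => f u / u ^ (p + 1)) (Ioc t (2 * t))) :
    f t ≤ 2 ^ (p + 1) * (∫ u in Ioc t (2 * t), f u / u ^ (p + 1)) * t ^ p := by
  have hlower : ∀ u ∈ Ioc t (2 * t), f t / (2 * t) ^ (p + 1) ≤ f u / u ^ (p + 1) := by
    intro u hu
    have hu0 : 0 < u := ht.trans hu.1
    have hfu : f t ≤ f u := hmono ⟨le_rfl, by linarith⟩ (Ioc_subset_Icc_self hu) hu.1.le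
    exact div_le_div₀ (hft.trans hfu) hfu (by positivity) (pow_le_pow_left₀ hu0.le hu.2 _)
  calc f t = 2 ^ (p + 1) * (f t / (2 * t) ^ (p + 1) * volume.real (Ioc t (2 * t))) * t ^ p := by
        rw [Real.volume_real_Ioc_of_le (by linarith), mul_pow, pow_succ t]
        field_simp
        ring
    _ ≤ 2 ^ (p + 1) * (∫ u in Ioc t (2 * t), f u / u ^ (p + 1)) * t ^ p := by
        gcongr
        exact setIntegral_ge_of_const_le_real measurableSet_Ioc (by simp) hlower hint

theorem isLittleO_pow_of_integrableOn_div_pow {f : ℝ → ℝ} {p : ℕ} {b : ℝ} (hb : 0 < b)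
    (hnonneg : ∀ t ∈ Ioc 0 b, 0 ≤ f t) (hmono : MonotoneOn f (Ioc 0 b))
    (hint : IntegrableOn (fun t => f t / t ^ (p + 1)) (Ioc 0 b)) :
    f =o[𝓝[>] 0] fun t => t ^ p := by
  set bound : ℝ → ℝ := fun t => 2 ^ (p + 1) * ∫ u in Ioc t (2 * t), f u / u ^ (p + 1)
  have hbound : Tendsto bound (𝓝[>] 0) (𝓝 0) := by
    simpa using (tendsto_setIntegral_Ioc_mul_nhdsGT_zero hb hint 2).const_mul (2 ^ (p + 1))
  have hlittle : (fun t => bound t * t ^ p) =o[𝓝[>] 0] fun t => t ^ p := by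
    simpa using ((Asymptotics.isLittleO_one_iff ℝ).2 hbound).mul_isBigO
      (Asymptotics.isBigO_refl (fun t => t ^ p) _)
  refine (Asymptotics.IsBigO.of_bound' ?_).trans_isLittleO hlittle
  filter_upwards [Ioo_mem_nhdsGT (half_pos hb)] with t ⟨ht, htb⟩
  have hsub : Icc t (2 * t) ⊆ Ioc 0 b := (Icc_subset_Ioc_iff (by linarith)).2 ⟨ht, by linarith⟩
  have hft : 0 ≤ f t := hnonneg t (hsub ⟨le_rfl, by linarith⟩)
  calc ‖f t‖ = f t := Real.norm_of_nonneg hft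
    _ ≤ bound t * t ^ p := le_mul_setIntegral_div_pow_of_monotoneOn ht hft (hmono.mono hsub)
        (hint.mono_set (Ioc_subset_Icc_self.trans hsub))
    _ ≤ ‖bound t * t ^ p‖ := Real.le_norm_self _

theorem IsScaleFunction.isLittleO_id {h : ℝ → ℝ} (hscale : IsScaleFunction h) :
    h =o[𝓝[>] 0] fun t => t := by
  simpa using isLittleO_pow_of_integrableOn_div_pow (p := 1) one_pos
    (fun t ht => hscale.nonneg t ht.1.le) (fun t ht u _ htu => hscale.mono ht.1.le htu)
    hscale.integrable

end ScaleFunction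

section DyadicSquare

theorem abs_floor_sub_floor_le {R : Type*} [Ring R] [LinearOrder R] [IsStrictOrderedRing R]
    [FloorRing R] {x y : R} {n : ℤ} (hxy : |x - y| ≤ n) : |⌊x⌋ - ⌊y⌋| ≤ n := by
  obtain ⟨hyx, hxy⟩ := abs_sub_le_iff.1 hxy
  rw [abs_sub_le_iff, sub_le_iff_le_add', sub_le_iff_le_add', ← Int.floor_add_intCast,
    ← Int.floor_add_intCast]
  exact ⟨Int.floor_mono (sub_le_iff_le_add'.1 hyx), Int.floor_mono (sub_le_iff_le_add'.1 hxy)⟩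

theorem exists_two_zpow_neg_mem_Ico {ρ : ℝ} (hρ : 0 < ρ) :
    ∃ k : ℤ, (2 : ℝ) ^ (-k) ∈ Ico ρ (2 * ρ) := by
  obtain ⟨n, hlt, hle⟩ := exists_mem_Ioc_zpow hρ one_lt_two
  refine ⟨-(n + 1), by rwa [neg_neg], ?_⟩
  rw [neg_neg, zpow_add_one₀ two_ne_zero]
  linarith

theorem mem_dyadicSquare_iff {k m n : ℤ} {z : ℂ} :
    z ∈ dyadicSquare k m n ↔ ⌊z.re / 2 ^ (-k)⌋ = m ∧ ⌊z.im / 2 ^ (-k)⌋ = n := by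
  have hside : (0 : ℝ) < 2 ^ (-k) := by positivity
  simp only [dyadicSquare, mem_ofPred_eq, Int.floor_eq_iff, le_div_iff₀ hside, div_lt_iff₀ hside,
    and_assoc]

theorem exists_mem_dyadicSquare (k : ℤ) (z : ℂ) : ∃ m n, z ∈ dyadicSquare k m n :=
  ⟨_, _, mem_dyadicSquare_iff.2 ⟨rfl, rfl⟩⟩

theorem abs_sub_le_one_of_mem_dyadicSquare {k m n m' n' : ℤ} {z w : ℂ}
    (hz : z ∈ dyadicSquare k m n) (hw : w ∈ dyadicSquare k m' n') (hzw : dist z w ≤ 2 ^ (-k)) :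
    |m - m'| ≤ 1 ∧ |n - n'| ≤ 1 := by
  obtain ⟨rfl, rfl⟩ := mem_dyadicSquare_iff.1 hz
  obtain ⟨rfl, rfl⟩ := mem_dyadicSquare_iff.1 hw
  have hside : (0 : ℝ) < 2 ^ (-k) := by positivity
  have hscaled : ∀ {x y : ℝ}, |x - y| ≤ dist z w → |x / 2 ^ (-k) - y / 2 ^ (-k)| ≤ (1 : ℤ) := by
    intro x y hxy
    rw [← sub_div, abs_div, abs_of_pos hside, Int.cast_one, div_le_one hside]
    exact hxy.trans hzw
  rw [dist_eq_norm] at hscaled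
  exact ⟨abs_floor_sub_floor_le (hscaled (abs_re_le_norm (z - w))),
    abs_floor_sub_floor_le (hscaled (abs_im_le_norm (z - w)))⟩

theorem dyadicSquare_subset_dilatedSquare {k m n m' n' : ℤ} (hm : |m - m'| ≤ 4)
    (hn : |n - n'| ≤ 4) : dyadicSquare k m n ⊆ dilatedSquare k m' n' := by
  rintro z ⟨hre, hre', him, him'⟩
  have hside : (0 : ℝ) < 2 ^ (-k) := by positivity
  have hm : |(m : ℝ) - m'| ≤ 4 := mod_cast hm
  have hn : |(n : ℝ) - n'| ≤ 4 := mod_cast hn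
  rw [abs_le] at hm hn
  refine ⟨abs_lt.2 ⟨?_, ?_⟩, abs_lt.2 ⟨?_, ?_⟩⟩ <;> nlinarith [hside]

theorem closedBall_subset_biUnion_dyadicSquare {k m n : ℤ} {z : ℂ} (hz : z ∈ dyadicSquare k m n) :
    closedBall z (2 ^ (-k)) ⊆
      ⋃ ij ∈ Finset.Icc (m - 1) (m + 1) ×ˢ Finset.Icc (n - 1) (n + 1),
        dyadicSquare k ij.1 ij.2 := by
  intro w hw
  obtain ⟨i, j, hwQ⟩ := exists_mem_dyadicSquare k w
  obtain ⟨hm, hn⟩ := abs_sub_le_one_of_mem_dyadicSquare hwQ hz hw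
  rw [abs_le] at hm hn
  refine mem_biUnion (x := (i, j)) ?_ hwQ
  simp only [Finset.coe_product, Finset.coe_Icc, mem_prod, mem_Icc]
  lia

end DyadicSquare

section Gset

variable {ν : Measure ℂ} {h : ℝ → ℝ} {s : ℝ}

theorem measure_dyadicSquare_le_of_notMem_Gset {k m n : ℤ} {z : ℂ} (hz : z ∉ Gset ν h s)
    (hk : (2 : ℝ) ^ (-k) ≤ s) (hzQ : z ∈ dilatedSquare k m n) :
    ν (dyadicSquare k m n) ≤ ENNReal.ofReal (h (2 ^ (-k))) := by
  by_contra! hheavy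
  exact hz (mem_iUnion₂.2 ⟨(k, m, n), ⟨hheavy, hk⟩, hzQ⟩)

theorem measure_closedBall_le_of_notMem_Gset {k : ℤ} {z : ℂ} (hz : z ∉ Gset ν h s)
    (hk : (2 : ℝ) ^ (-k) ≤ s) :
    ν (closedBall z (2 ^ (-k))) ≤ 9 * ENNReal.ofReal (h (2 ^ (-k))) := by
  obtain ⟨m, n, hzQ⟩ := exists_mem_dyadicSquare k z
  set neighbours := Finset.Icc (m - 1) (m + 1) ×ˢ Finset.Icc (n - 1) (n + 1)
  have hlight : ∀ ij ∈ neighbours,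
      ν (dyadicSquare k ij.1 ij.2) ≤ ENNReal.ofReal (h (2 ^ (-k))) := by
    intro ij hij
    obtain ⟨hi, hj⟩ := Finset.mem_product.1 hij
    rw [Finset.mem_Icc] at hi hj
    refine measure_dyadicSquare_le_of_notMem_Gset hz hk
      (dyadicSquare_subset_dilatedSquare (abs_le.2 ?_) (abs_le.2 ?_) hzQ) <;> lia
  have hcard : neighbours.card = 9 := by
    have hside : ∀ i : ℤ, i + 1 + 1 - (i - 1) = 3 := by lia
    simp [neighbours, hside]
  calc ν (closedBall z (2 ^ (-k)))
      ≤ ν (⋃ ij ∈ neighbours, dyadicSquare k ij.1 ij.2) :=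
        measure_mono (closedBall_subset_biUnion_dyadicSquare hzQ)
    _ ≤ ∑ ij ∈ neighbours, ν (dyadicSquare k ij.1 ij.2) := measure_biUnion_finset_le _ _
    _ ≤ neighbours.card • ENNReal.ofReal (h (2 ^ (-k))) := Finset.sum_le_card_nsmul _ _ _ hlight
    _ = 9 * ENNReal.ofReal (h (2 ^ (-k))) := by rw [hcard, nsmul_eq_mul, Nat.cast_ofNat]

theorem eventually_measure_closedBall_le_of_notMem_Gset (hh : h =o[𝓝[>] 0] fun t => t)
    (hs : 0 < s) {c : ℝ≥0} (hc : 0 < c) :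
    ∀ᶠ ρ in 𝓝[>] 0, ∀ z ∉ Gset ν h s, ν (closedBall z ρ) ≤ c * ENNReal.ofReal ρ := by
  have hsmall : ∀ᶠ t in 𝓝[>] 0, ‖h t‖ ≤ c / 18 * ‖t‖ := hh.def (by positivity)
  obtain ⟨r, hr, hsub⟩ := mem_nhdsGT_iff_exists_Ioo_subset.1 (hsmall.and (Ioo_mem_nhdsGT hs))
  filter_upwards [Ioo_mem_nhdsGT (half_pos hr)] with ρ ⟨hρ, hρr⟩ z hz
  obtain ⟨k, hk, hk'⟩ := exists_two_zpow_neg_mem_Ico hρ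
  have hside : (0 : ℝ) < 2 ^ (-k) := by positivity
  obtain ⟨hhk, -, hks⟩ := hsub ⟨hside, by linarith⟩
  rw [Real.norm_of_nonneg hside.le] at hhk
  have hreal : 9 * h (2 ^ (-k)) ≤ c * ρ := by
    have hcρ : (c : ℝ) * 2 ^ (-k) ≤ c * (2 * ρ) := by gcongr
    linarith [Real.le_norm_self (h (2 ^ (-k)))]
  calc ν (closedBall z ρ) ≤ ν (closedBall z (2 ^ (-k))) :=
        measure_mono (closedBall_subset_closedBall hk)
    _ ≤ 9 * ENNReal.ofReal (h (2 ^ (-k))) := measure_closedBall_le_of_notMem_Gset hz hks.le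
    _ = ENNReal.ofReal (9 * h (2 ^ (-k))) := by
        rw [ENNReal.ofReal_mul (by norm_num), ENNReal.ofReal_ofNat]
    _ ≤ ENNReal.ofReal (c * ρ) := ENNReal.ofReal_le_ofReal hreal
    _ = c * ENNReal.ofReal ρ := by rw [ENNReal.ofReal_mul c.coe_nonneg, ENNReal.ofReal_coe_nnreal]

theorem null_of_finite_length_outside_Gset_general (hh : h =o[𝓝[>] 0] fun t => t) (hs : 0 < s)
    {E : Set ℂ} (hEG : Disjoint E (Gset ν h s)) (hE : μH[1] E ≠ ⊤) : ν E = 0 := by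
  refine measure_eq_zero_of_closedBall_le_of_hausdorffMeasure_ne_top hE fun c hc => ?_
  filter_upwards [eventually_measure_closedBall_le_of_notMem_Gset hh hs hc] with ρ hρ z hz
  simpa using hρ z (hEG.notMem_of_mem_left hz)

end Gset

theorem null_of_finite_length_outside_Gset
    (ν : Measure ℂ) [IsFiniteMeasure ν]
    (h : ℝ → ℝ) (hscale : IsScaleFunction h) (s : ℝ) (hs : 0 < s) :
    (∀ E : Set ℂ, MeasurableSet E → E ⊆ (Gset ν h s)ᶜ → μH[1] E < ⊤ → ν E = 0) ∧
    (∀ γ : Set ℂ, IsJordanCurve γ → μH[1] γ < ⊤ → Disjoint γ (Gset ν h s) → ν γ = 0) :=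
  have hnull {E : Set ℂ} := null_of_finite_length_outside_Gset_general (ν := ν) (E := E)
    hscale.isLittleO_id hs
  ⟨fun _ _ hEG hE => hnull (disjoint_left.2 hEG) hE.ne, fun _ _ hγ hγG => hnull hγG hγ.ne⟩

end
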